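/- arXiv:1501.03420 — 2 statements merged into one kernel-verified Lean document; each statement's English description precedes it below -/
import Mathlib

section
/- Let {a_n} be positive reals, {b_n} real, and {α_n} positive reals satisfying: (a) a_n → ∞; (b') ∑_{n≥1} | (a_{n+1}/a_n)(α_{n+1}/α_n) − (a_n/a_{n−1})(α_{n−1}/α_n) | < ∞; (c) ∑_{n≥1} (1/a_{n−1}) | a_{n−1}/a_n − α_{n−1}/α_n | < ∞; (d) ∑_{n≥1} | b_{n+1}/a_n − (b_n/a_{n−1})(α_{n−1}/α_n) | < ∞; (e) ∑_{n≥0} 1/(a_n α_n) = ∞; (f) (α_{n−1}/α_n)(a_n/a_{n−1}) → 1; (g) limsup_{n→∞} |b_n|/a_n < 2. Then for every λ ∈ ℝ and every generalized eigenvector {u_n} associated with λ there exist constants c₁ > 0, c₂ > 0 and N ∈ ℕ such that for all n ≥ N: c₁/(a_n α_n) ≤ u_n² + u_{n+1}² ≤ c₂/(a_n α_n). -/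
/-!
The form `aₙαₙ (uₙ² - ρₙτₙ uₙuₙ₊₁ + ρₙ uₙ₊₁²)`, with `τₙ = (lam - bₙ) / aₙ` and `ρₙ` the quotient of
condition (f), is almost conserved along a generalized eigenvector: by the recurrence, its increment
is `aₙαₙ` times a form in `(uₙ, uₙ₊₁)` whose coefficients are the summable differences of the
hypotheses. Since `ρₙ → 1` and `limsup |τₙ| < 2`, the form is eventually coercive, so its relative
increments are summable and it converges to a positive limit. Being comparable to
`aₙαₙ (uₙ² + uₙ₊₁²)`, it keeps that quantity between positive constants. The recurrence
involves `bₙ` only through `lam - bₙ`, to which conditions (d) and (g) carry over by (c) and (a).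
-/

open Filter Topology

noncomputable section

/-- `u` is a generalized eigenvector of the Jacobi matrix `(a, b)` associated with `lam`:
`(u 0, u 1) ≠ (0, 0)` and `aₙ uₙ₊₁ = (lam − bₙ) uₙ − aₙ₋₁ uₙ₋₁` for all `n ≥ 1`. -/
def IsGenEig (a b : ℕ → ℝ) (lam : ℝ) (u : ℕ → ℝ) : Prop :=
  ¬(u 0 = 0 ∧ u 1 = 0) ∧
  ∀ n : ℕ, a (n + 1) * u (n + 2) = (lam - b (n + 1)) * u (n + 1) - a n * u n

theorem limsup_coe_lt_coe_iff {ι : Type*} {l : Filter ι} {f : ι → ℝ} {B : ℝ} :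
    limsup (fun i => (f i : EReal)) l < (B : EReal) ↔ ∃ q < B, ∀ᶠ i in l, f i ≤ q := by
  constructor
  · intro h
    obtain ⟨q, hfq, hqB⟩ := EReal.lt_iff_exists_real_btwn.1 h
    exact ⟨q, EReal.coe_lt_coe_iff.1 hqB,
      (eventually_lt_of_limsup_lt hfq).mono fun _ hi => (EReal.coe_lt_coe_iff.1 hi).le⟩
  · rintro ⟨q, hqB, hfq⟩
    exact (limsup_le_of_le (h := hfq.mono fun _ hi => EReal.coe_le_coe_iff.2 hi)).trans_lt
      (EReal.coe_lt_coe_iff.2 hqB)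

theorem limsup_abs_const_sub_div_lt {ι : Type*} {l : Filter ι} {a b : ι → ℝ} {B : ℝ}
    (ha : Tendsto a l atTop) (hb : limsup (fun i => ((|b i| / a i : ℝ) : EReal)) l < (B : EReal))
    (lam : ℝ) : limsup (fun i => ((|lam - b i| / a i : ℝ) : EReal)) l < (B : EReal) := by
  rw [limsup_coe_lt_coe_iff] at hb ⊢
  obtain ⟨q, hqB, hbq⟩ := hb
  refine ⟨(q + B) / 2, by linarith, ?_⟩
  have hlam : ∀ᶠ i in l, |lam| / a i < (B - q) / 2 :=
    (ha.const_div_atTop |lam|).eventually_lt_const (by linarith)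
  filter_upwards [ha.eventually_gt_atTop 0, hbq, hlam] with i hai hbi hlami
  calc |lam - b i| / a i ≤ (|lam| + |b i|) / a i := by gcongr; exact abs_sub _ _
    _ = |lam| / a i + |b i| / a i := add_div _ _ _
    _ ≤ (q + B) / 2 := by linarith

theorem exists_pos_tendsto_of_abs_sub_le_mul {T η : ℕ → ℝ} (hη : Summable η)
    (hpos : ∀ᶠ n in atTop, 0 < T n) (hstep : ∀ᶠ n in atTop, |T (n + 1) - T n| ≤ η n * T n) :
    ∃ L > 0, Tendsto T atTop (𝓝 L) := by
  have hrel : Summable fun n => (T (n + 1) - T n) / T n := by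
    refine hη.of_norm_bounded_eventually_nat ?_
    filter_upwards [hpos, hstep] with n hn hle
    rwa [Real.norm_eq_abs, abs_div, abs_of_pos hn, div_le_iff₀ hn]
  have hlog : Summable fun n => Real.log (T (n + 1)) - Real.log (T n) := by
    refine (summable_congr_atTop ?_).1 (Real.summable_log_one_add_of_summable hrel)
    filter_upwards [hpos, (tendsto_add_atTop_nat 1).eventually hpos] with n hn hn'
    rw [← Real.log_div hn'.ne' hn.ne', one_add_div hn.ne', add_sub_cancel]
  obtain ⟨s, hs⟩ := hlog
  have hlim : Tendsto (fun n => Real.log (T n)) atTop (𝓝 (s + Real.log (T 0))) := by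
    simpa only [Finset.sum_range_sub (fun n => Real.log (T n)), sub_add_cancel] using
      hs.tendsto_sum_nat.add_const (Real.log (T 0))
  refine ⟨Real.exp (s + Real.log (T 0)), Real.exp_pos _, hlim.rexp.congr' ?_⟩
  filter_upwards [hpos] with n hn using Real.exp_log hn

theorem abs_mul_le_sq_add_sq_div_two (x y : ℝ) : |x * y| ≤ (x ^ 2 + y ^ 2) / 2 := by
  rw [abs_mul, ← sq_abs x, ← sq_abs y]
  linarith [two_mul_le_add_sq |x| |y|]

theorem quadForm_bounds {c ρ τ : ℝ} (hρ : |ρ - 1| ≤ c) (hτ : |τ| ≤ 2 - 6 * c) (x y : ℝ) :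
    c * (x ^ 2 + y ^ 2) ≤ x ^ 2 - ρ * τ * (x * y) + ρ * y ^ 2 ∧
      x ^ 2 - ρ * τ * (x * y) + ρ * y ^ 2 ≤ 2 * (x ^ 2 + y ^ 2) := by
  have hc : 0 ≤ c := (abs_nonneg _).trans hρ
  have hρc : |ρ| ≤ 1 + c := by linarith [abs_sub_abs_le_abs_sub ρ 1, abs_one (α := ℝ)]
  have hρτ : |ρ * τ| ≤ 2 - 4 * c := by
    calc |ρ * τ| = |ρ| * |τ| := abs_mul _ _
      _ ≤ (1 + c) * (2 - 6 * c) := by gcongr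
      _ ≤ 2 - 4 * c := by nlinarith
  have hcross : |ρ * τ * (x * y)| ≤ (2 - 4 * c) * ((x ^ 2 + y ^ 2) / 2) := by
    rw [abs_mul]
    gcongr
    · exact (abs_nonneg _).trans hρτ
    · exact abs_mul_le_sq_add_sq_div_two x y
  have hdiag : |(ρ - 1) * y ^ 2| ≤ c * y ^ 2 := by
    rw [abs_mul, abs_of_nonneg (sq_nonneg y)]
    gcongr
  rw [abs_le] at hcross hdiag
  constructor <;> nlinarith [mul_nonneg hc (sq_nonneg x), mul_nonneg hc (sq_nonneg y)]

section GeneralizedEigenvector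

variable {a b α u : ℕ → ℝ} {lam : ℝ}

theorem IsGenEig.sq_add_sq_pos (ha : ∀ n, a n ≠ 0) (hu : IsGenEig a b lam u) (n : ℕ) :
    0 < u n ^ 2 + u (n + 1) ^ 2 := by
  suffices h : ¬(u n = 0 ∧ u (n + 1) = 0) by
    rcases not_and_or.1 h with h | h <;> positivity
  induction n with
  | zero => exact hu.1
  | succ n ih =>
    rintro ⟨h₁, h₂⟩
    have hrec := hu.2 n
    simp only [h₁, h₂, mul_zero, zero_sub, zero_eq_neg, mul_eq_zero, ha n, false_or] at hrec
    exact ih ⟨hrec, h₁⟩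

/-- The weighted squared norm of `(uₙ, uₙ₊₁)`, to be bounded above and away from zero. -/
def weightedSq (a α u : ℕ → ℝ) (n : ℕ) : ℝ :=
  a n * α n * (u n ^ 2 + u (n + 1) ^ 2)

theorem IsGenEig.weightedSq_pos (ha : ∀ n, 0 < a n) (hα : ∀ n, 0 < α n) (hu : IsGenEig a b lam u)
    (n : ℕ) : 0 < weightedSq a α u n :=
  mul_pos (mul_pos (ha n) (hα n)) (hu.sq_add_sq_pos (fun k => (ha k).ne') n)

/-- The quadratic form in `(uₙ₊₁, uₙ₊₂)` that is almost conserved along a generalized eigenvector.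
The index is shifted by one because the form in `(uₙ, uₙ₊₁)` involves `aₙ₋₁` and `αₙ₋₁`. -/
def eigEnergy (a b α : ℕ → ℝ) (lam : ℝ) (u : ℕ → ℝ) (n : ℕ) : ℝ :=
  a (n + 1) * α (n + 1) *
    (u (n + 1) ^ 2
      - α n / α (n + 1) * (a (n + 1) / a n) * ((lam - b (n + 1)) / a (n + 1))
        * (u (n + 1) * u (n + 2))
      + α n / α (n + 1) * (a (n + 1) / a n) * u (n + 2) ^ 2)

theorem IsGenEig.eigEnergy_succ_sub (ha : ∀ n, a n ≠ 0) (hα : ∀ n, α n ≠ 0)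
    (hu : IsGenEig a b lam u) (n : ℕ) :
    eigEnergy a b α lam u (n + 1) - eigEnergy a b α lam u n =
      a (n + 1) * α (n + 1) *
        ((a (n + 2) / a (n + 1) * (α (n + 2) / α (n + 1))
            - a (n + 1) / a n * (α n / α (n + 1))) * u (n + 2) ^ 2
          - ((lam - b (n + 2)) / a (n + 1) - (lam - b (n + 1)) / a n * (α n / α (n + 1)))
            * (u (n + 1) * u (n + 2))) := by
  have hrec : a (n + 2) * u (n + 3) = (lam - b (n + 2)) * u (n + 2) - a (n + 1) * u (n + 1) :=
    hu.2 (n + 1)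
  -- `p² - s p = q² - s q` whenever `p + q = s`.
  have hswap : (a (n + 2) * u (n + 3)) ^ 2
        - (lam - b (n + 2)) * u (n + 2) * (a (n + 2) * u (n + 3)) =
      (a (n + 1) * u (n + 1)) ^ 2
        - (lam - b (n + 2)) * u (n + 2) * (a (n + 1) * u (n + 1)) := by
    rw [hrec]; ring
  have hsucc : eigEnergy a b α lam u (n + 1) = a (n + 2) * α (n + 2) * u (n + 2) ^ 2
      + α (n + 1) / a (n + 1) * ((a (n + 2) * u (n + 3)) ^ 2
        - (lam - b (n + 2)) * u (n + 2) * (a (n + 2) * u (n + 3))) := by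
    have := ha (n + 1); have := ha (n + 2); have := hα (n + 2)
    simp only [eigEnergy, add_assoc, Nat.reduceAdd]
    field_simp
    ring
  rw [hsucc, hswap, eigEnergy]
  have := ha n; have := ha (n + 1); have := hα (n + 1)
  field_simp
  ring

theorem IsGenEig.abs_eigEnergy_succ_sub_le (ha : ∀ n, 0 < a n) (hα : ∀ n, 0 < α n)
    (hu : IsGenEig a b lam u) (n : ℕ) :
    |eigEnergy a b α lam u (n + 1) - eigEnergy a b α lam u n| ≤
      (|a (n + 2) / a (n + 1) * (α (n + 2) / α (n + 1)) - a (n + 1) / a n * (α n / α (n + 1))|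
        + |(lam - b (n + 2)) / a (n + 1) - (lam - b (n + 1)) / a n * (α n / α (n + 1))|)
        * weightedSq a α u (n + 1) := by
  rw [hu.eigEnergy_succ_sub (fun k => (ha k).ne') (fun k => (hα k).ne'), abs_mul,
    abs_of_pos (mul_pos (ha _) (hα _)), weightedSq, mul_left_comm (_ + _)]
  refine mul_le_mul_of_nonneg_left ?_ (mul_pos (ha _) (hα _)).le
  refine (abs_sub _ _).trans ?_
  rw [abs_mul, abs_mul, abs_of_nonneg (sq_nonneg (u (n + 2))), add_mul]
  gcongr
  · exact le_add_of_nonneg_left (sq_nonneg _)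
  · exact (abs_mul_le_sq_add_sq_div_two _ _).trans (half_le_self (by positivity))

theorem exists_eigEnergy_bounds (ha : ∀ n, 0 < a n) (hα : ∀ n, 0 < α n)
    (hρ : Tendsto (fun n => α n / α (n + 1) * (a (n + 1) / a n)) atTop (𝓝 1))
    (hτ : limsup (fun n => ((|lam - b n| / a n : ℝ) : EReal)) atTop < ((2 : ℝ) : EReal))
    (u : ℕ → ℝ) :
    ∃ c > 0, ∀ᶠ n in atTop, c * weightedSq a α u (n + 1) ≤ eigEnergy a b α lam u n ∧
      eigEnergy a b α lam u n ≤ 2 * weightedSq a α u (n + 1) := by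
  obtain ⟨q, hq, hτq⟩ := limsup_coe_lt_coe_iff.1 hτ
  have hc : 0 < (2 - q) / 6 := by linarith
  refine ⟨(2 - q) / 6, hc, ?_⟩
  filter_upwards [Metric.tendsto_nhds.1 hρ _ hc, (tendsto_add_atTop_nat 1).eventually hτq]
    with n hρn hτn
  have hτn' : |(lam - b (n + 1)) / a (n + 1)| ≤ 2 - 6 * ((2 - q) / 6) := by
    rw [abs_div, abs_of_pos (ha (n + 1))]
    linarith
  obtain ⟨hlow, hupp⟩ := quadForm_bounds hρn.le hτn' (u (n + 1)) (u (n + 2))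
  have hg := (mul_pos (ha (n + 1)) (hα (n + 1))).le
  rw [weightedSq, mul_left_comm, mul_left_comm 2]
  exact ⟨mul_le_mul_of_nonneg_left hlow hg, mul_le_mul_of_nonneg_left hupp hg⟩

theorem summable_abs_const_sub_div_sub (ha : ∀ n, 0 < a n)
    (haα : Summable fun n : ℕ => 1 / a n * |a n / a (n + 1) - α n / α (n + 1)|)
    (hb : Summable fun n : ℕ => |b (n + 2) / a (n + 1) - b (n + 1) / a n * (α n / α (n + 1))|)
    (lam : ℝ) :
    Summable fun n : ℕ =>
      |(lam - b (n + 2)) / a (n + 1) - (lam - b (n + 1)) / a n * (α n / α (n + 1))| := by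
  refine .of_nonneg_of_le (fun _ => abs_nonneg _) (fun n => ?_) ((haα.mul_left |lam|).add hb)
  have hsplit : (lam - b (n + 2)) / a (n + 1) - (lam - b (n + 1)) / a n * (α n / α (n + 1)) =
      lam * (1 / a n * (a n / a (n + 1) - α n / α (n + 1)))
        - (b (n + 2) / a (n + 1) - b (n + 1) / a n * (α n / α (n + 1))) := by
    have := (ha n).ne'
    field_simp
    ring
  rw [hsplit]
  refine (abs_sub _ _).trans_eq ?_
  rw [abs_mul, abs_mul, abs_of_pos (one_div_pos.2 (ha n))]

theorem IsGenEig.exists_pos_tendsto_eigEnergy {c : ℝ} (ha : ∀ n, 0 < a n) (hα : ∀ n, 0 < α n)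
    (hu : IsGenEig a b lam u) (hc : 0 < c)
    (hlow : ∀ᶠ n in atTop, c * weightedSq a α u (n + 1) ≤ eigEnergy a b α lam u n)
    (haα : Summable fun n : ℕ =>
      |a (n + 2) / a (n + 1) * (α (n + 2) / α (n + 1))
        - a (n + 1) / a n * (α n / α (n + 1))|)
    (hb : Summable fun n : ℕ =>
      |(lam - b (n + 2)) / a (n + 1) - (lam - b (n + 1)) / a n * (α n / α (n + 1))|) :
    ∃ L > 0, Tendsto (eigEnergy a b α lam u) atTop (𝓝 L) := by
  refine exists_pos_tendsto_of_abs_sub_le_mul ((haα.add hb).div_const c) ?_ ?_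
  · filter_upwards [hlow] with n hn
    exact (mul_pos hc (hu.weightedSq_pos ha hα (n + 1))).trans_le hn
  · filter_upwards [hlow] with n hn
    refine (hu.abs_eigEnergy_succ_sub_le ha hα n).trans ?_
    exact (mul_le_mul_of_nonneg_left ((le_div_iff₀' hc).2 hn) (by positivity)).trans_eq (by ring)

theorem genEigenvector_two_sided_bound_general (ha : ∀ n, 0 < a n) (hα : ∀ n, 0 < α n)
    (haα : Summable fun n : ℕ =>
      |a (n + 2) / a (n + 1) * (α (n + 2) / α (n + 1))
        - a (n + 1) / a n * (α n / α (n + 1))|)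
    (hb : Summable fun n : ℕ =>
      |(lam - b (n + 2)) / a (n + 1) - (lam - b (n + 1)) / a n * (α n / α (n + 1))|)
    (hρ : Tendsto (fun n => α n / α (n + 1) * (a (n + 1) / a n)) atTop (𝓝 1))
    (hτ : limsup (fun n => ((|lam - b n| / a n : ℝ) : EReal)) atTop < ((2 : ℝ) : EReal))
    (hu : IsGenEig a b lam u) :
    ∃ c₁ > (0 : ℝ), ∃ c₂ > (0 : ℝ), ∃ N : ℕ, ∀ n ≥ N,
      c₁ / (a n * α n) ≤ u n ^ 2 + u (n + 1) ^ 2 ∧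
      u n ^ 2 + u (n + 1) ^ 2 ≤ c₂ / (a n * α n) := by
  obtain ⟨c, hc, hcmp⟩ := exists_eigEnergy_bounds ha hα hρ hτ u
  obtain ⟨L, hL, hlim⟩ :=
    hu.exists_pos_tendsto_eigEnergy ha hα hc (hcmp.mono fun _ h => h.1) haα hb
  have hbound : ∀ᶠ n in atTop, L / 4 ≤ weightedSq a α u n ∧ weightedSq a α u n ≤ 2 * L / c := by
    rw [← map_add_atTop_eq_nat 1, eventually_map]
    filter_upwards [hcmp, hlim.eventually_const_lt (half_lt_self hL),
      hlim.eventually_lt_const (lt_two_mul_self hL)] with n ⟨hlow, hupp⟩ hgt hlt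
    rw [le_div_iff₀' hc]
    constructor <;> linarith
  obtain ⟨N, hN⟩ := eventually_atTop.1 hbound
  refine ⟨L / 4, by positivity, 2 * L / c, by positivity, N, fun n hn => ?_⟩
  have hg := mul_pos (ha n) (hα n)
  rw [div_le_iff₀' hg, le_div_iff₀' hg]
  exact hN n hn

end GeneralizedEigenvector

/-- Remark 6: under (a), (b′), (c)–(g), every generalized eigenvector satisfies the
two-sided bound `c₁/(aₙαₙ) ≤ uₙ² + uₙ₊₁² ≤ c₂/(aₙαₙ)` eventually. -/
theorem genEigenvector_two_sided_bound
    (a b α : ℕ → ℝ) (ha : ∀ n, 0 < a n) (hα : ∀ n, 0 < α n)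
    (h1 : Tendsto a atTop atTop)
    (h2 : Summable fun n : ℕ =>
      |a (n + 2) / a (n + 1) * (α (n + 2) / α (n + 1))
        - a (n + 1) / a n * (α n / α (n + 1))|)
    (h3 : Summable fun n : ℕ => 1 / a n * |a n / a (n + 1) - α n / α (n + 1)|)
    (h4 : Summable fun n : ℕ => |b (n + 2) / a (n + 1) - b (n + 1) / a n * (α n / α (n + 1))|)
    (h5 : ¬ Summable fun n : ℕ => 1 / (a n * α n))
    (h6 : Tendsto (fun n => α n / α (n + 1) * (a (n + 1) / a n)) atTop (𝓝 1))
    (h7 : limsup (fun n => ((|b n| / a n : ℝ) : EReal)) atTop < ((2 : ℝ) : EReal)) :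
    ∀ (lam : ℝ) (u : ℕ → ℝ), IsGenEig a b lam u →
      ∃ c₁ > (0 : ℝ), ∃ c₂ > (0 : ℝ), ∃ N : ℕ, ∀ n ≥ N,
        c₁ / (a n * α n) ≤ u n ^ 2 + u (n + 1) ^ 2 ∧
        u n ^ 2 + u (n + 1) ^ 2 ≤ c₂ / (a n * α n) := by
  intro lam u hu
  exact genEigenvector_two_sided_bound_general ha hα h2
    (summable_abs_const_sub_div_sub ha h3 h4 lam) h6 (limsup_abs_const_sub_div_lt h1 h7 lam) hu
end
end

section
/- Let C be a Jacobi matrix with weights {a_n} and diagonal {b_n}. Assume: (a) a_n → ∞; (b) ∑_{n≥0} 1/a_n = ∞; (c) the sequences {a_{n−1}/a_n}, {1/a_n} and {b_n/a_n} are of bounded variation (i.e., ∑_n of the absolute values of consecutive differences is finite); (d) lim_{n→∞} |b_n|/a_n < 2. Then C is self-adjoint, σ_p(C) = ∅, and σ(C) = ℝ. -/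
/-!
For real `l`, every solution of `(C - l)x = 0` away from the index `0` satisfies
`xₙ₊₂ = αₙxₙ₊₁ - βₙxₙ` with `αₙ = (l - bₙ₊₁)/aₙ₊₁` and `βₙ = aₙ/aₙ₊₁`. The Turán determinants
`Sₙ = aₙ(βₙ|xₙ|² - αₙ Re(x̄ₙxₙ₊₁) + |xₙ₊₁|²)` change from one step to the next only through the
increments of `α` and `β`, which are summable. Since `β → 1` and `lim |α| < 2`, the quadratic form
is eventually elliptic, so `Sₙ` stays away from `0` and `|xₙ|² + |xₙ₊₁|²` is at least a multiple of
`1/aₙ`, which is not summable. Hence `l` is no eigenvalue, and `(1, 0, 0, …)` has no preimage under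
`C - l`, because a preimage would be a square-summable solution away from the index `0`.

Self-adjointness is Carleman's argument: the Wronskians of two elements of the domain converge, and
they are summable after division by `aₙ`, so their limit is `0`.

Nonreal points lie in the resolvent set by Weyl's nested discs: the initial values `x₀` for which
the solution of `(C - l)x = y` satisfies `∑_{n ≤ N} |xₙ|² ≤ ‖y‖²/(Im l)²` form a decreasing sequence
of compact sets in `N`, nonempty because the solution vanishing at `N + 1` obeys this bound.
-/

open Filter Topology

noncomputable section

/-- Membership in the weighted ℓ² space with weight `w`. -/
def MemL2w (w : ℕ → ℝ) (f : ℕ → ℂ) : Prop :=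
  Summable fun n => w n * ‖f n‖ ^ 2

/-- The weighted ℓ² inner product. -/
def innerW (w : ℕ → ℝ) (f g : ℕ → ℂ) : ℂ :=
  ∑' n, (w n : ℂ) * star (f n) * g n

/-- The formal tridiagonal action of the Jacobi matrix with off-diagonal entries `a`
and diagonal entries `b`:  `(Cx)₀ = b₀x₀ + a₀x₁`,
`(Cx)ₙ = aₙ₋₁xₙ₋₁ + bₙxₙ + aₙxₙ₊₁` for `n ≥ 1`. -/
def jacobiAct (a b : ℕ → ℝ) (x : ℕ → ℂ) : ℕ → ℂ
  | 0 => (b 0 : ℂ) * x 0 + (a 0 : ℂ) * x 1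
  | n + 1 => (a n : ℂ) * x n + (b (n + 1) : ℂ) * x (n + 1) + (a (n + 1) : ℂ) * x (n + 2)

/-- The maximal domain of the formal operator `T` inside the weighted ℓ² space. -/
def DomW (w : ℕ → ℝ) (T : (ℕ → ℂ) → ℕ → ℂ) : Set (ℕ → ℂ) :=
  {x | MemL2w w x ∧ MemL2w w (T x)}

/-- `T`, on its maximal domain in weighted ℓ², is self-adjoint:
the graph of the adjoint operator coincides with the graph of `T`. -/
def IsSelfAdjointW (w : ℕ → ℝ) (T : (ℕ → ℂ) → ℕ → ℂ) : Prop :=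
  ∀ y z : ℕ → ℂ, MemL2w w y → MemL2w w z →
    ((∀ x ∈ DomW w T, innerW w (T x) y = innerW w x z) ↔ (y ∈ DomW w T ∧ T y = z))

/-- The point spectrum (set of eigenvalues) of `T` on its maximal domain. -/
def eigenW (w : ℕ → ℝ) (T : (ℕ → ℂ) → ℕ → ℂ) : Set ℂ :=
  {l | ∃ x ∈ DomW w T, x ≠ 0 ∧ T x = fun n => l * x n}

/-- The spectrum of `T`: those `l` for which `T - l` is not a bijection from the maximal
domain onto the weighted ℓ² space (for a closed operator this is the usual spectrum). -/
def spectrumW (w : ℕ → ℝ) (T : (ℕ → ℂ) → ℕ → ℂ) : Set ℂ :=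
  {l | ¬ ((∀ x ∈ DomW w T, T x = (fun n => l * x n) → x = 0) ∧
          ∀ y : ℕ → ℂ, MemL2w w y → ∃ x ∈ DomW w T, (fun n => T x n - l * x n) = y)}

/-- The essential spectrum: the set of accumulation points of the spectrum. -/
def essSpectrumW (w : ℕ → ℝ) (T : (ℕ → ℂ) → ℕ → ℂ) : Set ℂ :=
  {z | AccPt z (𝓟 (spectrumW w T))}

section Sequences

lemma exists_tendsto_of_summable_abs_sub {f : ℕ → ℝ}
    (hf : Summable fun n => |f (n + 1) - f n|) : ∃ r, Tendsto f atTop (𝓝 r) :=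
  cauchySeq_tendsto_of_complete <| cauchySeq_of_summable_dist <| by
    simpa only [Real.dist_eq, abs_sub_comm] using hf

lemma le_one_of_tendsto_div_succ {a : ℕ → ℝ} {r : ℝ} (ha : Tendsto a atTop atTop)
    (hr : Tendsto (fun n => a n / a (n + 1)) atTop (𝓝 r)) : r ≤ 1 := by
  by_contra! h
  have hinv : Tendsto (fun n => ‖a (n + 1)‖ / ‖a n‖) atTop (𝓝 |r⁻¹|) := by
    simpa only [inv_div, ← abs_div, Real.norm_eq_abs] using (hr.inv₀ (by positivity)).abs
  have hlt : |r⁻¹| < 1 := by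
    rw [abs_of_pos (by positivity)]
    exact inv_lt_one_of_one_lt₀ h
  have hsum := summable_of_ratio_test_tendsto_lt_one hlt (ha.eventually_ne_atTop 0) hinv
  exact not_tendsto_nhds_of_tendsto_atTop ha 0 hsum.tendsto_atTop_zero

lemma one_le_of_tendsto_div_succ {a : ℕ → ℝ} {r : ℝ} (ha : ∀ᶠ n in atTop, 0 < a n)
    (hdiv : ¬ Summable fun n => 1 / a n)
    (hr : Tendsto (fun n => a n / a (n + 1)) atTop (𝓝 r)) : 1 ≤ r := by
  by_contra! h
  refine hdiv (summable_of_ratio_test_tendsto_lt_one h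
    (ha.mono fun n hn => (one_div_pos.2 hn).ne') (hr.congr' ?_))
  filter_upwards [ha, (tendsto_add_atTop_nat 1).eventually ha] with n hn hn'
  rw [Real.norm_of_nonneg (one_div_pos.2 hn).le, Real.norm_of_nonneg (one_div_pos.2 hn').le,
    div_div_eq_mul_div, div_one, one_div_mul_eq_div]

lemma tendsto_div_succ_one {a : ℕ → ℝ} (ha : Tendsto a atTop atTop)
    (hdiv : ¬ Summable fun n => 1 / a n)
    (hbv : Summable fun n => |a (n + 1) / a (n + 2) - a n / a (n + 1)|) :
    Tendsto (fun n => a n / a (n + 1)) atTop (𝓝 1) := by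
  obtain ⟨r, hr⟩ := exists_tendsto_of_summable_abs_sub (f := fun n => a n / a (n + 1)) hbv
  have hr1 : r = 1 := le_antisymm (le_one_of_tendsto_div_succ ha hr)
    (one_le_of_tendsto_div_succ (ha.eventually_gt_atTop 0) hdiv hr)
  exact hr1 ▸ hr

lemma summable_one_div_of_le_abs_mul {a q : ℕ → ℝ} {δ : ℝ} (hδ : 0 < δ)
    (h : ∀ᶠ n in atTop, δ ≤ |a n| * q n) (hq : Summable q) : Summable fun n => 1 / a n := by
  refine (hq.mul_left δ⁻¹).of_norm_bounded_eventually_nat (h.mono fun n hn => ?_)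
  have ha : 0 < |a n| := (abs_nonneg _).lt_of_ne fun h0 => by
    rw [← h0, zero_mul] at hn
    exact hn.not_gt hδ
  rw [Real.norm_eq_abs, abs_one_div, inv_mul_eq_div, div_le_div_iff₀ ha hδ]
  linarith

lemma backward_discrete_gronwall {S ε : ℕ → ℝ} {N : ℕ} (hε : ∀ n, 0 ≤ ε n) (hsum : Summable ε)
    (hS : ∀ n ≥ N, 0 ≤ S n) (hstep : ∀ n ≥ N, S n ≤ (1 + ε n) * S (n + 1)) {n : ℕ} (hn : N ≤ n) :
    S N ≤ Real.exp (∑' i, ε i) * S n := by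
  have hpartial : S N ≤ Real.exp (∑ i ∈ Finset.Ico N n, ε i) * S n := by
    induction n, hn using Nat.le_induction with
    | base => simp
    | succ n hn ih =>
      have hS' := hS (n + 1) (hn.trans n.le_succ)
      calc S N ≤ Real.exp (∑ i ∈ Finset.Ico N n, ε i) * S n := ih
        _ ≤ Real.exp (∑ i ∈ Finset.Ico N n, ε i) * (Real.exp (ε n) * S (n + 1)) := by
          gcongr
          refine (hstep n hn).trans (mul_le_mul_of_nonneg_right ?_ hS')
          linarith [Real.add_one_le_exp (ε n)]
        _ = Real.exp (∑ i ∈ Finset.Ico N (n + 1), ε i) * S (n + 1) := by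
          rw [Finset.sum_Ico_succ_top hn, Real.exp_add, mul_assoc]
  exact hpartial.trans <| mul_le_mul_of_nonneg_right
    (Real.exp_le_exp.2 (hsum.sum_le_tsum _ fun i _ => hε i)) (hS n hn)

lemma eq_zero_of_three_term_recurrence {K M : Type*} [DivisionRing K] [AddCommGroup M] [Module K M]
    {α β : ℕ → K} {u : ℕ → M} (hβ : ∀ n, β n ≠ 0)
    (hu : ∀ n, u (n + 2) = α n • u (n + 1) - β n • u n) {N : ℕ} (hN : u N = 0)
    (hN' : u (N + 1) = 0) : u = 0 := by
  have hstart : u 0 = 0 ∧ u 1 = 0 := by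
    induction N with
    | zero => exact ⟨hN, hN'⟩
    | succ N ih =>
      have h := hu N
      rw [hN, hN', smul_zero, zero_sub, zero_eq_neg] at h
      exact ih ((smul_eq_zero.1 h).resolve_left (hβ N)) hN
  funext n
  induction n using Nat.twoStepInduction with
  | zero => exact hstart.1
  | one => exact hstart.2
  | more n h0 h1 => simp only [hu, h0, h1, Pi.zero_apply, smul_zero, sub_zero]

/-- The nested-compactness argument behind Weyl's limit point / limit circle construction. -/
lemma exists_summable_of_forall_exists_sum_range_le {X : Type*} [TopologicalSpace X]
    {g : X → ℕ → ℝ} {K : ℝ} (hg : ∀ t n, 0 ≤ g t n) (hcont : ∀ n, Continuous fun t => g t n)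
    (hcpt : IsCompact {t | g t 0 ≤ K})
    (hne : ∀ N, ∃ t, ∑ n ∈ Finset.range (N + 1), g t n ≤ K) : ∃ t, Summable (g t) := by
  have hclosed (N : ℕ) : IsClosed {t | ∑ n ∈ Finset.range (N + 1), g t n ≤ K} :=
    isClosed_le (continuous_finsetSum _ fun n _ => hcont n) continuous_const
  obtain ⟨t, ht⟩ := IsCompact.nonempty_iInter_of_sequence_nonempty_isCompact_isClosed
    (fun N => {t | ∑ n ∈ Finset.range (N + 1), g t n ≤ K})
    (fun N t ht => (Finset.sum_le_sum_of_subset_of_nonneg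
      (Finset.range_mono (N + 1).le_succ) fun n _ _ => hg t n).trans ht)
    hne (by simpa using hcpt) hclosed
  refine ⟨t, summable_of_sum_range_le (c := K) (hg t) fun N => ?_⟩
  exact (Finset.sum_le_sum_of_subset_of_nonneg (Finset.range_mono N.le_succ)
    fun n _ _ => hg t n).trans (Set.mem_iInter.1 ht N)

end Sequences

section TuranDeterminants

open scoped InnerProductSpace

variable {E : Type*} [NormedAddCommGroup E] [InnerProductSpace ℝ E]

/-- The quadratic form `β|x|² - α⟨x, y⟩ + |y|²`, which is positive definite for `β` near `1` and
`|α| < 2`; it takes the value `|y|² - ⟨x, z⟩` at consecutive terms of a solution `x`, `y`,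
`z = αy - βx` of a three-term recurrence. -/
def turanForm (α β : ℝ) (x y : E) : ℝ := β * ‖x‖ ^ 2 - α * ⟪x, y⟫_ℝ + ‖y‖ ^ 2

/-- The Turán determinants `aₙ(|uₙ₊₁|² - ⟨uₙ, uₙ₊₂⟩)` of a solution of
`uₙ₊₂ = αₙuₙ₊₁ - (aₙ/aₙ₊₁)uₙ`, in a form which only involves `uₙ` and `uₙ₊₁`. -/
def turanDet (a α : ℕ → ℝ) (u : ℕ → E) (n : ℕ) : ℝ :=
  a n * turanForm (α n) (a n / a (n + 1)) (u n) (u (n + 1))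

lemma abs_mul_inner_le (s : ℝ) (x y : E) : |s * ⟪x, y⟫_ℝ| ≤ |s| / 2 * (‖x‖ ^ 2 + ‖y‖ ^ 2) :=
  calc |s * ⟪x, y⟫_ℝ| ≤ |s| * (‖x‖ * ‖y‖) := by
        rw [abs_mul]
        gcongr
        exact abs_real_inner_le_norm x y
    _ ≤ |s| * ((‖x‖ ^ 2 + ‖y‖ ^ 2) / 2) := by
        gcongr
        linarith [two_mul_le_add_sq ‖x‖ ‖y‖]
    _ = |s| / 2 * (‖x‖ ^ 2 + ‖y‖ ^ 2) := by ring

lemma le_turanForm {α β c : ℝ} (hβ : c + |α| / 2 ≤ β) (h1 : c + |α| / 2 ≤ 1) (x y : E) :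
    c * (‖x‖ ^ 2 + ‖y‖ ^ 2) ≤ turanForm α β x y := by
  have hcross := (abs_le.1 (abs_mul_inner_le α x y)).2
  have hx := mul_le_mul_of_nonneg_right hβ (sq_nonneg ‖x‖)
  have hy := mul_le_mul_of_nonneg_right h1 (sq_nonneg ‖y‖)
  unfold turanForm
  linarith

lemma turanForm_le {α β c : ℝ} (hβ : β + |α| / 2 ≤ c) (h1 : 1 + |α| / 2 ≤ c) (x y : E) :
    turanForm α β x y ≤ c * (‖x‖ ^ 2 + ‖y‖ ^ 2) := by
  have hcross := (abs_le.1 (abs_mul_inner_le α x y)).1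
  have hx := mul_le_mul_of_nonneg_right hβ (sq_nonneg ‖x‖)
  have hy := mul_le_mul_of_nonneg_right h1 (sq_nonneg ‖y‖)
  unfold turanForm
  linarith

lemma turanForm_recurrence (α α' β β' : ℝ) {x y z : E} (hz : z = α • y - β • x) :
    turanForm α' β' y z =
      β * turanForm α β x y + ((β' - β) * ‖y‖ ^ 2 - (α' - α) * ⟪y, z⟫_ℝ) := by
  have hyz : ⟪y, z⟫_ℝ = α * ‖y‖ ^ 2 - β * ⟪x, y⟫_ℝ := by
    rw [hz, inner_sub_right, inner_smul_right, inner_smul_right, real_inner_self_eq_norm_sq,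
      real_inner_comm]
  have hzz : ‖z‖ ^ 2 = α ^ 2 * ‖y‖ ^ 2 - 2 * α * β * ⟪x, y⟫_ℝ + β ^ 2 * ‖x‖ ^ 2 := by
    rw [hz, norm_sub_sq_real, norm_smul, norm_smul, inner_smul_left, inner_smul_right,
      real_inner_comm, mul_pow, mul_pow, Real.norm_eq_abs, Real.norm_eq_abs, sq_abs, sq_abs]
    simp only [conj_trivial]
    ring
  unfold turanForm
  rw [hzz, hyz]
  ring

lemma mul_turanForm_le {α α' β β' c : ℝ} {x y z : E} (hc : 0 < c) (hz : z = α • y - β • x)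
    (hell : c * (‖y‖ ^ 2 + ‖z‖ ^ 2) ≤ turanForm α' β' y z) :
    β * turanForm α β x y ≤
      (1 + (|β' - β| + |α' - α|) / c) * turanForm α' β' y z := by
  have hβ : -(|β' - β| * (‖y‖ ^ 2 + ‖z‖ ^ 2)) ≤ (β' - β) * ‖y‖ ^ 2 := by
    have h := mul_le_mul_of_nonneg_right (neg_abs_le (β' - β)) (sq_nonneg ‖y‖)
    have h' : 0 ≤ |β' - β| * ‖z‖ ^ 2 := by positivity
    linarith
  have hα : (α' - α) * ⟪y, z⟫_ℝ ≤ |α' - α| * (‖y‖ ^ 2 + ‖z‖ ^ 2) := by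
    have h := (le_abs_self _).trans (abs_mul_inner_le (α' - α) y z)
    have h' : 0 ≤ |α' - α| * (‖y‖ ^ 2 + ‖z‖ ^ 2) := by positivity
    linarith
  have herr : (|β' - β| + |α' - α|) * (‖y‖ ^ 2 + ‖z‖ ^ 2) ≤
      (|β' - β| + |α' - α|) / c * turanForm α' β' y z := by
    rw [div_mul_eq_mul_div, le_div_iff₀ hc, mul_assoc, mul_comm _ c]
    gcongr
  linarith [turanForm_recurrence α α' β β' hz]

variable {a α : ℕ → ℝ} {u : ℕ → E}

lemma turanDet_le_succ {c : ℝ} {n : ℕ} (ha : 0 < a (n + 1)) (hc : 0 < c)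
    (hu : u (n + 2) = α n • u (n + 1) - (a n / a (n + 1)) • u n)
    (hell : c * (‖u (n + 1)‖ ^ 2 + ‖u (n + 2)‖ ^ 2) ≤
      turanForm (α (n + 1)) (a (n + 1) / a (n + 2)) (u (n + 1)) (u (n + 2))) :
    turanDet a α u n ≤
      (1 + (|a (n + 1) / a (n + 2) - a n / a (n + 1)| + |α (n + 1) - α n|) / c) *
        turanDet a α u (n + 1) := by
  have h := mul_le_mul_of_nonneg_left (mul_turanForm_le hc hu hell) ha.le
  rw [← mul_assoc, mul_div_cancel₀ _ ha.ne', mul_left_comm] at h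
  exact h

/-- Every `c` in `(0, 1 - |A| / 2)` is an ellipticity constant; the proof takes the midpoint. -/
lemma eventually_turanForm_bounds {β : ℕ → ℝ} {A : ℝ} (hβ : Tendsto β atTop (𝓝 1))
    (hα : Tendsto α atTop (𝓝 A)) (hA : |A| < 2) :
    ∃ c > 0, ∀ᶠ n in atTop, ∀ x y : E,
      c * (‖x‖ ^ 2 + ‖y‖ ^ 2) ≤ turanForm (α n) (β n) x y ∧
      turanForm (α n) (β n) x y ≤ 2 * (‖x‖ ^ 2 + ‖y‖ ^ 2) := by
  have hα2 : Tendsto (fun n => |α n| / 2) atTop (𝓝 (|A| / 2)) := hα.abs.div_const 2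
  refine ⟨(2 - |A|) / 4, by linarith, ?_⟩
  filter_upwards [(hα2.const_add ((2 - |A|) / 4)).eventually_lt hβ (by linarith),
    (hα2.const_add ((2 - |A|) / 4)).eventually_lt_const (u := 1) (by linarith),
    (hβ.add hα2).eventually_lt_const (u := 2) (by linarith),
    (hα2.const_add 1).eventually_lt_const (u := 2) (by linarith)] with n h1 h2 h3 h4 x y
  exact ⟨le_turanForm h1.le h2.le x y, turanForm_le h3.le h4.le x y⟩

lemma eq_zero_of_summable_norm_sq_of_elliptic {A : ℝ} (ha : ∀ n, 0 < a n)
    (hdiv : ¬ Summable fun n => 1 / a n)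
    (hβbv : Summable fun n => |a (n + 1) / a (n + 2) - a n / a (n + 1)|)
    (hβ : Tendsto (fun n => a n / a (n + 1)) atTop (𝓝 1))
    (hαbv : Summable fun n => |α (n + 1) - α n|) (hα : Tendsto α atTop (𝓝 A)) (hA : |A| < 2)
    (hu : ∀ n, u (n + 2) = α n • u (n + 1) - (a n / a (n + 1)) • u n)
    (hsum : Summable fun n => ‖u n‖ ^ 2) : u = 0 := by
  obtain ⟨c, hc, hev⟩ := eventually_turanForm_bounds (E := E) hβ hα hA
  obtain ⟨N, hN⟩ := eventually_atTop.1 hev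
  have hlow (n : ℕ) (hn : N ≤ n) := (hN n hn (u n) (u (n + 1))).1
  have hnonneg (n : ℕ) (hn : N ≤ n) : 0 ≤ turanDet a α u n :=
    mul_nonneg (ha n).le ((by positivity : (0 : ℝ) ≤ _).trans (hlow n hn))
  obtain ⟨M, hM, hgrowth⟩ : ∃ M > 0, ∀ n ≥ N, turanDet a α u N ≤ M * turanDet a α u n :=
    ⟨_, Real.exp_pos _, fun n hn => backward_discrete_gronwall (fun n => by positivity)
      ((hβbv.add hαbv).div_const c) hnonneg
      (fun n hn => turanDet_le_succ (ha _) hc (hu n) (hlow (n + 1) (hn.trans n.le_succ))) hn⟩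
  have hzero : turanDet a α u N = 0 := by
    by_contra hne
    have hsum' : Summable fun n => ‖u n‖ ^ 2 + ‖u (n + 1)‖ ^ 2 :=
      hsum.add ((summable_nat_add_iff 1).2 hsum)
    refine hdiv (summable_one_div_of_le_abs_mul ((hnonneg N le_rfl).lt_of_ne' hne)
      (eventually_atTop.2 ⟨N, fun n hn => ?_⟩) (hsum'.mul_left (M * 2)))
    calc turanDet a α u N ≤ M * turanDet a α u n := hgrowth n hn
      _ ≤ M * (a n * (2 * (‖u n‖ ^ 2 + ‖u (n + 1)‖ ^ 2))) := by
        gcongr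
        exact mul_le_mul_of_nonneg_left (hN n hn _ _).2 (ha n).le
      _ = |a n| * (M * 2 * (‖u n‖ ^ 2 + ‖u (n + 1)‖ ^ 2)) := by
        rw [abs_of_pos (ha n)]
        ring
  have hsq : ‖u N‖ ^ 2 + ‖u (N + 1)‖ ^ 2 ≤ 0 := by
    have h := hlow N le_rfl
    rw [(mul_eq_zero.1 hzero).resolve_left (ha N).ne'] at h
    exact nonpos_of_mul_nonpos_right h hc
  refine eq_zero_of_three_term_recurrence (fun n => (div_pos (ha n) (ha (n + 1))).ne') hu (N := N)
    ?_ ?_ <;> rw [← norm_eq_zero, ← sq_eq_zero_iff] <;>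
    linarith [sq_nonneg ‖u N‖, sq_nonneg ‖u (N + 1)‖]

end TuranDeterminants

section RealEnergies

variable {a b : ℕ → ℝ}

lemma recurrence_of_jacobiAct_succ {l : ℝ} {x : ℕ → ℂ} {n : ℕ} (ha : a (n + 1) ≠ 0)
    (hx : jacobiAct a b x (n + 1) = l * x (n + 1)) :
    x (n + 2) = ((l - b (n + 1)) / a (n + 1)) • x (n + 1) - (a n / a (n + 1)) • x n := by
  have hne : (a (n + 1) : ℂ) ≠ 0 := Complex.ofReal_ne_zero.2 ha
  simp only [jacobiAct] at hx
  simp only [Complex.real_smul]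
  push_cast
  field_simp
  linear_combination hx

lemma summable_abs_sub_sub_div (l : ℝ) (ha : Summable fun n => |1 / a (n + 1) - 1 / a n|)
    (hb : Summable fun n => |b (n + 1) / a (n + 1) - b n / a n|) :
    Summable fun n => |(l - b (n + 1)) / a (n + 1) - (l - b n) / a n| := by
  refine ((ha.mul_left |l|).add hb).of_nonneg_of_le (fun n => abs_nonneg _) fun n => ?_
  calc |(l - b (n + 1)) / a (n + 1) - (l - b n) / a n|
      = |l * (1 / a (n + 1) - 1 / a n) - (b (n + 1) / a (n + 1) - b n / a n)| := by
        congr 1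
        ring
    _ ≤ |l| * |1 / a (n + 1) - 1 / a n| + |b (n + 1) / a (n + 1) - b n / a n| := by
        rw [← abs_mul]
        exact abs_sub _ _

lemma tendsto_sub_div (l : ℝ) {q : ℝ} (ha : Tendsto a atTop atTop)
    (hq : Tendsto (fun n => b n / a n) atTop (𝓝 q)) :
    Tendsto (fun n => (l - b n) / a n) atTop (𝓝 (-q)) := by
  simpa only [sub_div, zero_sub] using (ha.const_div_atTop l).sub hq

/-- The equation at the index `0` is not imposed, so that the conclusion covers preimages of
`(1, 0, 0, …)` as well as eigenvectors. -/
lemma eq_zero_of_jacobiAct_succ_eq (ha : ∀ n, 0 < a n) (htop : Tendsto a atTop atTop)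
    (hdiv : ¬ Summable fun n => 1 / a n)
    (hratio : Summable fun n => |a (n + 1) / a (n + 2) - a n / a (n + 1)|)
    (hinv : Summable fun n => |1 / a (n + 1) - 1 / a n|)
    (hdiag : Summable fun n => |b (n + 1) / a (n + 1) - b n / a n|)
    {L : ℝ} (hL : L < 2) (hlim : Tendsto (fun n => |b n| / a n) atTop (𝓝 L))
    (l : ℝ) {x : ℕ → ℂ} (hx : Summable fun n => ‖x n‖ ^ 2)
    (hsol : ∀ n, jacobiAct a b x (n + 1) = l * x (n + 1)) : x = 0 := by
  obtain ⟨q, hq⟩ := exists_tendsto_of_summable_abs_sub (f := fun n => b n / a n) hdiag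
  have hqL : |q| = L := tendsto_nhds_unique
    (hq.abs.congr fun n => by rw [abs_div, abs_of_pos (ha n)]) hlim
  exact eq_zero_of_summable_norm_sq_of_elliptic (α := fun n => (l - b (n + 1)) / a (n + 1))
    ha hdiv hratio (tendsto_div_succ_one htop hdiv hratio)
    ((summable_nat_add_iff 1).2 (summable_abs_sub_sub_div l hinv hdiag))
    ((tendsto_sub_div l htop hq).comp (tendsto_add_atTop_nat 1)) (by rwa [abs_neg, hqL])
    (fun n => recurrence_of_jacobiAct_succ (ha (n + 1)).ne' (hsol n)) hx

end RealEnergies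

section WeightedL2

variable {w : ℕ → ℝ} {f g : ℕ → ℂ} {T : (ℕ → ℂ) → ℕ → ℂ}

lemma memL2w_one_iff : MemL2w (fun _ => 1) f ↔ Summable fun n => ‖f n‖ ^ 2 := by
  simp only [MemL2w, one_mul]

lemma innerW_one (f g : ℕ → ℂ) : innerW (fun _ => 1) f g = ∑' n, star (f n) * g n := by
  simp only [innerW, Complex.ofReal_one, one_mul]

lemma innerW_one_single (m : ℕ) (g : ℕ → ℂ) : innerW (fun _ => 1) (Pi.single m 1) g = g m := by
  rw [innerW_one, tsum_eq_single m fun n hn => by rw [Pi.single_eq_of_ne hn, star_zero, zero_mul],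
    Pi.single_eq_same, star_one, one_mul]

lemma MemL2w.const_mul (hf : MemL2w w f) (l : ℂ) : MemL2w w fun n => l * f n := by
  simpa only [MemL2w, norm_mul, mul_pow, mul_left_comm] using Summable.mul_left (‖l‖ ^ 2) hf

lemma MemL2w.add (hw : ∀ n, 0 ≤ w n) (hf : MemL2w w f) (hg : MemL2w w g) :
    MemL2w w fun n => f n + g n := by
  refine ((Summable.add hf hg).mul_left 2).of_nonneg_of_le
    (fun n => mul_nonneg (hw n) (sq_nonneg _)) fun n => ?_
  calc w n * ‖f n + g n‖ ^ 2 ≤ w n * (2 * (‖f n‖ ^ 2 + ‖g n‖ ^ 2)) :=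
        mul_le_mul_of_nonneg_left
          ((pow_le_pow_left₀ (norm_nonneg _) (norm_add_le _ _) 2).trans add_sq_le) (hw n)
    _ = 2 * (w n * ‖f n‖ ^ 2 + w n * ‖g n‖ ^ 2) := by ring

lemma memL2w_of_forall_gt_eq_zero {m : ℕ} (hf : ∀ n > m, f n = 0) : MemL2w w f :=
  summable_of_ne_finset_zero (s := Finset.range (m + 1)) fun n hn => by
    rw [hf n (by simpa using hn), norm_zero, zero_pow two_ne_zero, mul_zero]

lemma summable_norm_mul_norm {E F : Type*} [SeminormedAddCommGroup E] [SeminormedAddCommGroup F]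
    {x : ℕ → E} {y : ℕ → F} (hx : Summable fun n => ‖x n‖ ^ 2)
    (hy : Summable fun n => ‖y n‖ ^ 2) : Summable fun n => ‖x n‖ * ‖y n‖ :=
  (hx.add hy).of_nonneg_of_le (fun n => by positivity) fun n => by
    nlinarith [two_mul_le_add_sq ‖x n‖ ‖y n‖, sq_nonneg ‖x n‖, sq_nonneg ‖y n‖]

lemma summable_star_mul (hf : Summable fun n => ‖f n‖ ^ 2) (hg : Summable fun n => ‖g n‖ ^ 2) :
    Summable fun n => star (f n) * g n :=
  .of_norm <| by simpa only [norm_mul, norm_star] using summable_norm_mul_norm hf hg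

lemma MemL2w.innerW_self_ne_zero (hw : ∀ n, 0 < w n) (hf : MemL2w w f) (hf0 : f ≠ 0) :
    innerW w f f ≠ 0 := by
  have hinner : innerW w f f = ((∑' n, w n * ‖f n‖ ^ 2 : ℝ) : ℂ) := by
    rw [innerW, Complex.ofReal_tsum]
    refine tsum_congr fun n => ?_
    rw [mul_assoc, Complex.star_def, Complex.conj_mul']
    push_cast
    rfl
  obtain ⟨n, hn⟩ := Function.ne_iff.1 hf0
  rw [hinner, Complex.ofReal_ne_zero]
  exact (Summable.tsum_pos hf (fun n => mul_nonneg (hw n).le (sq_nonneg _)) n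
    (mul_pos (hw n) (pow_pos (norm_pos_iff.2 hn) 2))).ne'

lemma IsSelfAdjointW.eigenW_subset (hw : ∀ n, 0 < w n) (hT : IsSelfAdjointW w T) :
    eigenW w T ⊆ Set.range ((↑) : ℝ → ℂ) := by
  rintro l ⟨x, hx, hne, hTx⟩
  have hsymm := (hT x (T x) hx.1 hx.2).2 ⟨hx, rfl⟩ x hx
  have hleft : innerW w (T x) x = star l * innerW w x x := by
    simp only [innerW, hTx, star_mul', ← tsum_mul_left]
    exact tsum_congr fun n => by ring
  have hright : innerW w x (T x) = l * innerW w x x := by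
    simp only [innerW, hTx, ← tsum_mul_left]
    exact tsum_congr fun n => by ring
  rw [hleft, hright] at hsymm
  exact ⟨l.re, Complex.conj_eq_iff_re.1
    (mul_right_cancel₀ (hx.1.innerW_self_ne_zero hw hne) hsymm)⟩

end WeightedL2

section Carleman

variable {a b : ℕ → ℝ} {x y : ℕ → ℂ}

/-- The Wronskian `aₙ(x̄ₙ₊₁yₙ - x̄ₙyₙ₊₁)`: the boundary term at `n` in the summation by parts for
`⟨Cx, y⟩ - ⟨x, Cy⟩`. -/
def wronskian (a : ℕ → ℝ) (x y : ℕ → ℂ) (n : ℕ) : ℂ :=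
  a n * (star (x (n + 1)) * y n - star (x n) * y (n + 1))

lemma green_identity_jacobiAct (a b : ℕ → ℝ) (x y : ℕ → ℂ) (N : ℕ) :
    ∑ n ∈ Finset.range (N + 1),
      (star (jacobiAct a b x n) * y n - star (x n) * jacobiAct a b y n) = wronskian a x y N := by
  induction N with
  | zero =>
    simp [jacobiAct, wronskian]
    ring
  | succ N ih =>
    rw [Finset.sum_range_succ, ih]
    simp [jacobiAct, wronskian]
    ring

lemma tendsto_wronskian (hxy : Summable fun n => star (jacobiAct a b x n) * y n)
    (hyx : Summable fun n => star (x n) * jacobiAct a b y n) :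
    Tendsto (wronskian a x y) atTop
      (𝓝 (innerW (fun _ => 1) (jacobiAct a b x) y - innerW (fun _ => 1) x (jacobiAct a b y))) := by
  rw [innerW_one, innerW_one, ← hxy.tsum_sub hyx]
  exact ((tendsto_add_atTop_iff_nat 1).2 (hxy.sub hyx).hasSum.tendsto_sum_nat).congr
    (green_identity_jacobiAct a b x y)

lemma eq_zero_of_tendsto_wronskian (hdiv : ¬ Summable fun n => 1 / a n)
    (hx : Summable fun n => ‖x n‖ ^ 2) (hy : Summable fun n => ‖y n‖ ^ 2) {W : ℂ}
    (hW : Tendsto (wronskian a x y) atTop (𝓝 W)) : W = 0 := by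
  by_contra hne
  have hpos : 0 < ‖W‖ := norm_pos_iff.2 hne
  have hx' : Summable fun n => ‖x (n + 1)‖ ^ 2 := (summable_nat_add_iff 1).2 hx
  have hy' : Summable fun n => ‖y (n + 1)‖ ^ 2 := (summable_nat_add_iff 1).2 hy
  have hsum := (summable_norm_mul_norm hx' hy).add (summable_norm_mul_norm hx hy')
  refine hdiv (summable_one_div_of_le_abs_mul (half_pos hpos) ?_ hsum)
  filter_upwards [hW.norm.eventually_const_lt (half_lt_self hpos)] with n hn
  calc ‖W‖ / 2 ≤ ‖wronskian a x y n‖ := hn.le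
    _ = |a n| * ‖star (x (n + 1)) * y n - star (x n) * y (n + 1)‖ := by
      rw [wronskian, norm_mul, Complex.norm_real, Real.norm_eq_abs]
    _ ≤ |a n| * (‖x (n + 1)‖ * ‖y n‖ + ‖x n‖ * ‖y (n + 1)‖) := by
      gcongr
      simpa only [norm_mul, norm_star] using
        norm_sub_le (star (x (n + 1)) * y n) (star (x n) * y (n + 1))

lemma innerW_jacobiAct_of_mem_domW (hdiv : ¬ Summable fun n => 1 / a n)
    (hx : x ∈ DomW (fun _ => 1) (jacobiAct a b)) (hy : y ∈ DomW (fun _ => 1) (jacobiAct a b)) :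
    innerW (fun _ => 1) (jacobiAct a b x) y = innerW (fun _ => 1) x (jacobiAct a b y) := by
  obtain ⟨hx, hCx⟩ := hx
  obtain ⟨hy, hCy⟩ := hy
  rw [memL2w_one_iff] at hx hCx hy hCy
  exact sub_eq_zero.1 <| eq_zero_of_tendsto_wronskian hdiv hx hy <|
    tendsto_wronskian (summable_star_mul hCx hy) (summable_star_mul hx hCy)

lemma jacobiAct_eq_zero_of_forall_gt {m : ℕ} (hx : ∀ n > m, x n = 0) :
    ∀ n > m + 1, jacobiAct a b x n = 0 := by
  rintro (_ | n) hn
  · omega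
  · simp only [jacobiAct, hx n (by omega), hx (n + 1) (by omega), hx (n + 2) (by omega), mul_zero,
      add_zero]

lemma mem_domW_of_forall_gt_eq_zero {m : ℕ} (hx : ∀ n > m, x n = 0) :
    x ∈ DomW (fun _ => 1) (jacobiAct a b) :=
  ⟨memL2w_of_forall_gt_eq_zero hx,
    memL2w_of_forall_gt_eq_zero (jacobiAct_eq_zero_of_forall_gt hx)⟩

lemma innerW_jacobiAct_of_forall_gt_eq_zero {m : ℕ} (hx : ∀ n > m, x n = 0) (y : ℕ → ℂ) :
    innerW (fun _ => 1) (jacobiAct a b x) y = innerW (fun _ => 1) x (jacobiAct a b y) := by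
  have hsum {f : ℕ → ℂ} {k : ℕ} (hf : ∀ n > k, f n = 0) (g : ℕ → ℂ) :
      Summable fun n => star (f n) * g n :=
    summable_of_ne_finset_zero (s := Finset.range (k + 1)) fun n hn => by
      rw [hf n (by simpa using hn), star_zero, zero_mul]
  have hzero : ∀ᶠ n in atTop, 0 = wronskian a x y n := by
    filter_upwards [eventually_gt_atTop m] with n hn
    simp only [wronskian, hx n hn, hx (n + 1) (by omega), star_zero, zero_mul, sub_zero, mul_zero]
  exact sub_eq_zero.1 <| tendsto_nhds_unique
    (tendsto_wronskian (hsum (jacobiAct_eq_zero_of_forall_gt hx) y) (hsum hx _))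
    (tendsto_const_nhds.congr' hzero)

lemma isSelfAdjointW_jacobiAct (hdiv : ¬ Summable fun n => 1 / a n) :
    IsSelfAdjointW (fun _ => 1) (jacobiAct a b) := by
  refine fun y z hy hz => ⟨fun h => ?_, ?_⟩
  · have hCy : jacobiAct a b y = z := by
      funext m
      have hsingle : ∀ n > m, (Pi.single m 1 : ℕ → ℂ) n = 0 :=
        fun n hn => Pi.single_eq_of_ne hn.ne' 1
      have hm := h _ (mem_domW_of_forall_gt_eq_zero hsingle)
      rwa [innerW_jacobiAct_of_forall_gt_eq_zero hsingle, innerW_one_single,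
        innerW_one_single] at hm
    exact ⟨⟨hy, hCy ▸ hz⟩, hCy⟩
  · rintro ⟨hy, rfl⟩ x hx
    exact innerW_jacobiAct_of_mem_domW hdiv hx hy

end Carleman

section NonrealEnergies

variable {a b : ℕ → ℝ} {l : ℂ}

/-- The formal solution `x` of `(C - l)x = y` with `x₀ = t`. -/
def jacobiSolution (a b : ℕ → ℝ) (l : ℂ) (y : ℕ → ℂ) (t : ℂ) : ℕ → ℂ
  | 0 => t
  | 1 => (l * t + y 0 - b 0 * t) / a 0
  | n + 2 => (l * jacobiSolution a b l y t (n + 1) + y (n + 1)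
      - b (n + 1) * jacobiSolution a b l y t (n + 1)
      - a n * jacobiSolution a b l y t n) / a (n + 1)

lemma jacobiAct_jacobiSolution (ha : ∀ n, a n ≠ 0) (y : ℕ → ℂ) (t : ℂ) (n : ℕ) :
    jacobiAct a b (jacobiSolution a b l y t) n = l * jacobiSolution a b l y t n + y n := by
  have ha' (n : ℕ) : (a n : ℂ) ≠ 0 := Complex.ofReal_ne_zero.2 (ha n)
  cases n with
  | zero =>
    simp only [jacobiAct, jacobiSolution, mul_div_cancel₀ _ (ha' 0)]
    ring
  | succ n =>
    simp only [jacobiAct, jacobiSolution.eq_3, mul_div_cancel₀ _ (ha' (n + 1))]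
    ring

lemma jacobiSolution_eq_add_mul (a b : ℕ → ℝ) (l : ℂ) (y : ℕ → ℂ) (t : ℂ) (n : ℕ) :
    jacobiSolution a b l y t n = jacobiSolution a b l y 0 n + t * jacobiSolution a b l 0 1 n := by
  induction n using Nat.twoStepInduction with
  | zero => simp only [jacobiSolution, mul_one, zero_add]
  | one =>
    simp only [jacobiSolution, Pi.zero_apply]
    ring
  | more n h0 h1 =>
    simp only [jacobiSolution.eq_3, h0, h1, Pi.zero_apply]
    ring

lemma im_mul_sum_norm_sq_eq {x y : ℕ → ℂ} (hx : ∀ n, jacobiAct a b x n = l * x n + y n) {N : ℕ}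
    (hN : x (N + 1) = 0) :
    l.im * ∑ n ∈ Finset.range (N + 1), ‖x n‖ ^ 2 =
      -∑ n ∈ Finset.range (N + 1), (star (x n) * y n).im := by
  have hterm (n : ℕ) : (star (jacobiAct a b x n) * x n - star (x n) * jacobiAct a b x n).im =
      -2 * (l.im * ‖x n‖ ^ 2 + (star (x n) * y n).im) := by
    rw [hx n, Complex.sq_norm, Complex.normSq_apply]
    simp only [Complex.star_def, map_add, map_mul, Complex.sub_im, Complex.mul_im, Complex.add_re,
      Complex.add_im, Complex.mul_re, Complex.conj_re, Complex.conj_im]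
    ring
  have hgreen := congrArg Complex.im (green_identity_jacobiAct a b x x N)
  rw [wronskian, hN, star_zero, zero_mul, mul_zero, sub_zero, mul_zero, Complex.zero_im,
    Complex.im_sum, Finset.sum_congr rfl fun n _ => hterm n, ← Finset.mul_sum,
    Finset.sum_add_distrib, ← Finset.mul_sum] at hgreen
  linarith

lemma im_sq_mul_sum_norm_sq_le {x y : ℕ → ℂ} (hx : ∀ n, jacobiAct a b x n = l * x n + y n) {N : ℕ}
    (hN : x (N + 1) = 0) :
    l.im ^ 2 * ∑ n ∈ Finset.range (N + 1), ‖x n‖ ^ 2 ≤ ∑ n ∈ Finset.range (N + 1), ‖y n‖ ^ 2 := by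
  have hyoung (n : ℕ) :
      l.im * -(star (x n) * y n).im ≤ (l.im ^ 2 * ‖x n‖ ^ 2 + ‖y n‖ ^ 2) / 2 :=
    calc l.im * -(star (x n) * y n).im ≤ |l.im * -(star (x n) * y n).im| := le_abs_self _
      _ ≤ |l.im| * (‖x n‖ * ‖y n‖) := by
        rw [abs_mul, abs_neg, ← norm_star (x n), ← norm_mul]
        gcongr
        exact Complex.abs_im_le_norm _
      _ ≤ (l.im ^ 2 * ‖x n‖ ^ 2 + ‖y n‖ ^ 2) / 2 := by
        rw [← sq_abs l.im]
        linarith [two_mul_le_add_sq (|l.im| * ‖x n‖) ‖y n‖]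
  have hsum := Finset.sum_le_sum fun n (_ : n ∈ Finset.range (N + 1)) => hyoung n
  rw [← Finset.mul_sum, Finset.sum_neg_distrib, ← im_mul_sum_norm_sq_eq hx hN, ← Finset.sum_div,
    Finset.sum_add_distrib, ← Finset.mul_sum] at hsum
  linarith

lemma jacobiSolution_homogeneous_ne_zero (ha : ∀ n, a n ≠ 0) (hl : l.im ≠ 0) (N : ℕ) :
    jacobiSolution a b l 0 1 (N + 1) ≠ 0 := by
  intro hN
  have hle := im_sq_mul_sum_norm_sq_le (jacobiAct_jacobiSolution (l := l) ha 0 1) hN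
  have hpos : 0 < ∑ n ∈ Finset.range (N + 1), ‖jacobiSolution a b l 0 1 n‖ ^ 2 :=
    Finset.sum_pos' (fun n _ => sq_nonneg _)
      ⟨0, Finset.mem_range.2 N.succ_pos, by simp [jacobiSolution]⟩
  simp only [Pi.zero_apply, norm_zero, ne_eq, OfNat.ofNat_ne_zero, not_false_eq_true, zero_pow,
    Finset.sum_const_zero] at hle
  exact hle.not_gt (mul_pos (by positivity) hpos)

lemma exists_jacobiSolution_eq_zero (ha : ∀ n, a n ≠ 0) (hl : l.im ≠ 0) (y : ℕ → ℂ) (N : ℕ) :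
    ∃ t, jacobiSolution a b l y t (N + 1) = 0 :=
  ⟨-(jacobiSolution a b l y 0 (N + 1) / jacobiSolution a b l 0 1 (N + 1)), by
    rw [jacobiSolution_eq_add_mul, neg_mul,
      div_mul_cancel₀ _ (jacobiSolution_homogeneous_ne_zero ha hl N), add_neg_cancel]⟩

lemma exists_summable_jacobiSolution (ha : ∀ n, a n ≠ 0) (hl : l.im ≠ 0) {y : ℕ → ℂ}
    (hy : Summable fun n => ‖y n‖ ^ 2) :
    ∃ t, Summable fun n => ‖jacobiSolution a b l y t n‖ ^ 2 := by
  have hcont (n : ℕ) : Continuous fun t => ‖jacobiSolution a b l y t n‖ ^ 2 := by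
    have haffine : Continuous fun t =>
        jacobiSolution a b l y 0 n + t * jacobiSolution a b l 0 1 n := by fun_prop
    exact (haffine.congr fun t => (jacobiSolution_eq_add_mul a b l y t n).symm).norm.pow 2
  have hcpt (K : ℝ) : IsCompact {t | ‖jacobiSolution a b l y t 0‖ ^ 2 ≤ K} :=
    (isCompact_closedBall (0 : ℂ) √K).of_isClosed_subset
      (isClosed_le (hcont 0) continuous_const)
      fun t ht => mem_closedBall_zero_iff.2 (Real.le_sqrt_of_sq_le ht)
  refine exists_summable_of_forall_exists_sum_range_le (K := (∑' n, ‖y n‖ ^ 2) / l.im ^ 2)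
    (fun t n => sq_nonneg _) hcont (hcpt _) fun N => ?_
  obtain ⟨t, ht⟩ := exists_jacobiSolution_eq_zero (b := b) ha hl y N
  refine ⟨t, (le_div_iff₀' (by positivity)).2 ?_⟩
  exact (im_sq_mul_sum_norm_sq_le (jacobiAct_jacobiSolution ha y t) ht).trans
    (hy.sum_le_tsum _ fun n _ => sq_nonneg _)

end NonrealEnergies

section Spectrum

variable {a b : ℕ → ℝ} {l : ℂ}

lemma exists_mem_domW_jacobiAct_sub_eq (ha : ∀ n, a n ≠ 0) (hl : l.im ≠ 0) {y : ℕ → ℂ}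
    (hy : MemL2w (fun _ => 1) y) :
    ∃ x ∈ DomW (fun _ => 1) (jacobiAct a b), (fun n => jacobiAct a b x n - l * x n) = y := by
  obtain ⟨t, ht⟩ := exists_summable_jacobiSolution (b := b) ha hl (memL2w_one_iff.1 hy)
  have hC := jacobiAct_jacobiSolution (b := b) (l := l) ha y t
  have hx := memL2w_one_iff.2 ht
  refine ⟨_, ⟨hx, ?_⟩, funext fun n => by rw [hC, add_sub_cancel_left]⟩
  rw [funext hC]
  exact (hx.const_mul l).add (fun _ => zero_le_one) hy

lemma spectrumW_jacobiAct_subset (ha : ∀ n, a n ≠ 0)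
    (hsa : IsSelfAdjointW (fun _ => 1) (jacobiAct a b)) :
    spectrumW (fun _ => 1) (jacobiAct a b) ⊆ Set.range ((↑) : ℝ → ℂ) := by
  intro l hspec
  by_contra hreal
  have hl : l.im ≠ 0 := fun him => hreal ⟨l.re, Complex.ext rfl him.symm⟩
  refine hspec ⟨fun x hx hCx => ?_, fun y hy => exists_mem_domW_jacobiAct_sub_eq ha hl hy⟩
  by_contra hne
  exact hreal (hsa.eigenW_subset (fun _ => one_pos) ⟨x, hx, hne, hCx⟩)

lemma mem_spectrumW_jacobiAct_of_forall_eq_zero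
    (h : ∀ x : ℕ → ℂ, (Summable fun n => ‖x n‖ ^ 2) →
      (∀ n, jacobiAct a b x (n + 1) = l * x (n + 1)) → x = 0) :
    l ∈ spectrumW (fun _ => 1) (jacobiAct a b) := by
  rintro ⟨-, hsurj⟩
  obtain ⟨x, hx, hCx⟩ := hsurj (Pi.single 0 1)
    (memL2w_of_forall_gt_eq_zero fun n hn => Pi.single_eq_of_ne hn.ne' 1)
  have hx0 : x = 0 := h x (memL2w_one_iff.1 hx.1) fun n => sub_eq_zero.1 <|
    (congrFun hCx (n + 1)).trans (Pi.single_eq_of_ne n.succ_ne_zero 1)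
  have h0 := congrFun hCx 0
  simp [jacobiAct, hx0] at h0

end Spectrum

/-- Theorem (Janas–Moszyński): bounded variation conditions imply that the Jacobi
matrix is self-adjoint, has no eigenvalues and has spectrum ℝ. -/
theorem jacobi_boundedVariation_spectrum_real
    (a b : ℕ → ℝ) (ha : ∀ n, 0 < a n)
    (h1 : Tendsto a atTop atTop)
    (h2 : ¬ Summable fun n : ℕ => 1 / a n)
    (h3a : Summable fun n : ℕ => |a (n + 1) / a (n + 2) - a n / a (n + 1)|)
    (h3b : Summable fun n : ℕ => |1 / a (n + 1) - 1 / a n|)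
    (h3c : Summable fun n : ℕ => |b (n + 1) / a (n + 1) - b n / a n|)
    (h4 : ∃ L : ℝ, L < 2 ∧ Tendsto (fun n => |b n| / a n) atTop (𝓝 L)) :
    IsSelfAdjointW (fun _ => 1) (jacobiAct a b) ∧
    eigenW (fun _ => 1) (jacobiAct a b) = ∅ ∧
    spectrumW (fun _ => 1) (jacobiAct a b) = Set.range ((↑) : ℝ → ℂ) := by
  obtain ⟨L, hL, hlim⟩ := h4
  have hsa : IsSelfAdjointW (fun _ => 1) (jacobiAct a b) := isSelfAdjointW_jacobiAct h2
  have hdecay (r : ℝ) (x : ℕ → ℂ) (hx : Summable fun n => ‖x n‖ ^ 2)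
      (hsol : ∀ n, jacobiAct a b x (n + 1) = r * x (n + 1)) : x = 0 :=
    eq_zero_of_jacobiAct_succ_eq ha h1 h2 h3a h3b h3c hL hlim r hx hsol
  refine ⟨hsa, Set.eq_empty_iff_forall_notMem.2 fun l hl => ?_, Set.Subset.antisymm
    (spectrumW_jacobiAct_subset (fun n => (ha n).ne') hsa) (Set.range_subset_iff.2 fun r => ?_)⟩
  · obtain ⟨r, rfl⟩ := hsa.eigenW_subset (fun _ => one_pos) hl
    obtain ⟨x, hx, hne, hCx⟩ := hl
    exact hne (hdecay r x (memL2w_one_iff.1 hx.1) fun n => congrFun hCx (n + 1))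
  · exact mem_spectrumW_jacobiAct_of_forall_eq_zero (hdecay r)
end
end
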